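/- arXiv:2412.07281 — 4 statements merged into one kernel-verified Lean document; each statement's English description precedes it below -/
import Mathlib

section
/- Let S be a numerical semigroup with multiplicity four. Then (𝔑(S), ⪯) is a lattice that is not distributive; that is, there exist I, J, K ∈ 𝔑(S) such that I ∧ (J ∨ K) ≠ (I ∧ J) ∨ (I ∧ K), where ∧ and ∨ denote the infimum and supremum with respect to ⪯. -/
open Pointwise

/-- A numerical semigroup: an additive submonoid of `ℕ` with finite complement. -/
def IsNumericalSemigroup (S : Set ℕ) : Prop :=
  0 ∈ S ∧ (∀ a ∈ S, ∀ b ∈ S, a + b ∈ S) ∧ Sᶜ.Finite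

/-- A normalized (relative) ideal of `S`: a subset of `ℕ` with `min I = 0`
(equivalently `0 ∈ I`) satisfying `I + S ⊆ I`. -/
def IsNormalizedIdeal (S I : Set ℕ) : Prop :=
  0 ∈ I ∧ ∀ i ∈ I, ∀ s ∈ S, i + s ∈ I

/-- The set `𝔑(S)` of normalized ideals of `S`. -/
def NI (S : Set ℕ) : Set (Set ℕ) := {I : Set ℕ | IsNormalizedIdeal S I}

/-- The multiplicity of `S`: its least nonzero element. -/
noncomputable def multNS (S : Set ℕ) : ℕ := sInf {n : ℕ | n ∈ S ∧ n ≠ 0}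

/-- The Frobenius number of `S` (or of an ideal): the largest natural number not in `S`. -/
noncomputable def frobNS (S : Set ℕ) : ℕ := sSup Sᶜ

/-- A minimal generator of `S`: a nonzero element of `S` that is not the sum
of two nonzero elements of `S`. -/
def IsMinimalGenerator (S : Set ℕ) (a : ℕ) : Prop :=
  a ∈ S ∧ a ≠ 0 ∧ ¬ ∃ b ∈ S, ∃ c ∈ S, b ≠ 0 ∧ c ≠ 0 ∧ a = b + c

/-- A minimal generator of an ideal `I` of a numerical semigroup `T`:
an element `x ∈ I` with `x ≠ y + t` for every `y ∈ I` and nonzero `t ∈ T`. -/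
def IsMinGenOfIdeal (T I : Set ℕ) (x : ℕ) : Prop :=
  x ∈ I ∧ ∀ y ∈ I, ∀ t ∈ T, t ≠ 0 → x ≠ y + t

/-- The order `⪯` on normalized ideals: `I ⪯ J` iff `I + K = J` for some `K ∈ 𝔑(S)`. -/
def Preceq (S I J : Set ℕ) : Prop :=
  ∃ K : Set ℕ, IsNormalizedIdeal S K ∧ I + K = J

/-- `M` is the supremum of `{I, J}` in `(𝔑(S), ⪯)`. -/
def IsSupNI (S I J M : Set ℕ) : Prop :=
  IsNormalizedIdeal S M ∧ Preceq S I M ∧ Preceq S J M ∧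
    ∀ L : Set ℕ, IsNormalizedIdeal S L → Preceq S I L → Preceq S J L → Preceq S M L

/-- `M` is the infimum of `{I, J}` in `(𝔑(S), ⪯)`. -/
def IsInfNI (S I J M : Set ℕ) : Prop :=
  IsNormalizedIdeal S M ∧ Preceq S M I ∧ Preceq S M J ∧
    ∀ L : Set ℕ, IsNormalizedIdeal S L → Preceq S L I → Preceq S L J → Preceq S L M

/-- `(𝔑(S), ⪯)` is a lattice: every pair of normalized ideals has a supremum
and an infimum with respect to `⪯`. -/
def NILattice (S : Set ℕ) : Prop :=
  ∀ I J : Set ℕ, IsNormalizedIdeal S I → IsNormalizedIdeal S J →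
    (∃ M : Set ℕ, IsSupNI S I J M) ∧ (∃ M : Set ℕ, IsInfNI S I J M)

/-- The ordinary numerical semigroup `H_m = {0} ∪ {n : n ≥ m}`. -/
def ordinaryNS (m : ℕ) : Set ℕ := {0} ∪ {n : ℕ | m ≤ n}

/-- `I ∈ 𝔑(S) \ {S}` is `+`-irreducible if `I = J + K` with `J, K ∈ 𝔑(S)`
implies `I = J` or `I = K`. -/
def PlusIrreducible (S I : Set ℕ) : Prop :=
  IsNormalizedIdeal S I ∧ I ≠ S ∧
    ∀ J K : Set ℕ, IsNormalizedIdeal S J → IsNormalizedIdeal S K → I = J + K → I = J ∨ I = K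

/-! A normalized ideal is determined by its Apéry set modulo `4`, hence by three Kunz coordinates,
and in these coordinates `⪯` becomes an explicit system of linear inequalities. It can be read as a
partial order on all of `ℕ³`, of which `𝔑(S)` is the part above `S`.

An element of `ℕ³` has at most three lower covers, one for each coordinate that is raised (raising
the first or the third may force the second to grow too), and any two of them have a meet. In a
locally finite order with a top element this local condition already produces all joins, and the
meets of all pairs bounded below: it is the dual of the lattice criterion of Björner, Edelman and
Ziegler.

Distributivity fails near the top, at `(1, 0, 1)`, `(0, 0, 1)`, `(0, 1, 0)`: the last two have join
`(0, 0, 0)`, while each has meet `(1, 1, 1)` with the first. All triples with coordinates at most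
`1` belong to `𝔑(S)`, because the nonzero elements of `S` are at least `4`. -/

section Apery

variable {m : ℕ} {w v u : ZMod m → ℕ}

/-- `w` lists the least elements, residue class by residue class modulo `m`, of a set of naturals
that contains `0` and is stable under adding `m`: the Apéry set, indexed by its residues. -/
structure IsApery (w : ZMod m → ℕ) : Prop where
  zero : w 0 = 0
  cast (c : ZMod m) : (w c : ZMod m) = c

/-- The set of naturals whose least elements in the residue classes modulo `m` are given by `w`. -/
def aperyIdeal (w : ZMod m → ℕ) : Set ℕ := {n | w n ≤ n}

/-- The order `⪯` read off the Apéry sets. The inequality says that the translate of `aperyIdeal w`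
which moves `w d` to `v c` stays inside `aperyIdeal v` on the residue class of `j`. -/
def AperyLE (w v : ZMod m → ℕ) : Prop :=
  ∀ c, ∃ d, ∀ j, v (c - d + j) + w d ≤ v c + w j

theorem mem_aperyIdeal {n : ℕ} : n ∈ aperyIdeal w ↔ w n ≤ n := Iff.rfl

theorem IsApery.mem_aperyIdeal (hw : IsApery w) (c : ZMod m) : w c ∈ aperyIdeal w := by
  rw [_root_.mem_aperyIdeal, hw.cast]

theorem AperyLE.refl (w : ZMod m → ℕ) : AperyLE w w := fun c => ⟨c, fun j => by simp [add_comm]⟩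

theorem AperyLE.trans (hwv : AperyLE w v) (hvu : AperyLE v u) : AperyLE w u := by
  intro c
  obtain ⟨d, hd⟩ := hvu c
  obtain ⟨e, he⟩ := hwv d
  refine ⟨e, fun j => ?_⟩
  have hu := hd (d - e + j)
  have hv := he j
  rw [show c - d + (d - e + j) = c - e + j by abel] at hu
  omega

theorem AperyLE.le (hw : IsApery w) (hv : IsApery v) (h : AperyLE w v) (c : ZMod m) :
    v c ≤ w c := by
  obtain ⟨d, hd⟩ := h 0
  have hwd : w d = 0 := by
    have := hd 0
    rw [hv.zero, hw.zero] at this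
    omega
  have hd0 : d = 0 := by rw [← hw.cast d, hwd, Nat.cast_zero]
  simpa [hd0, hw.zero, hv.zero] using hd c

theorem aperyLE_of_add_eq {K : Set ℕ} (hw : IsApery w) (hv : IsApery v)
    (h : aperyIdeal w + K = aperyIdeal v) : AperyLE w v := by
  intro c
  obtain ⟨i, hi, k, hk, hik : i + k = v c⟩ := h ▸ hv.mem_aperyIdeal c
  refine ⟨i, fun j => ?_⟩
  have hjk : w j + k ∈ aperyIdeal v := h ▸ Set.add_mem_add (hw.mem_aperyIdeal j) hk
  have hclass : ((w j + k : ℕ) : ZMod m) = c - i + j := by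
    rw [Nat.cast_add, hw.cast, ← hv.cast c, ← hik, Nat.cast_add]
    abel
  rw [mem_aperyIdeal, hclass] at hjk
  rw [mem_aperyIdeal] at hi
  omega

theorem AperyLE.preceq {S : Set ℕ} (hw : IsApery w) (hv : IsApery v)
    (hI : IsNormalizedIdeal S (aperyIdeal w)) (h : AperyLE w v) :
    Preceq S (aperyIdeal w) (aperyIdeal v) := by
  refine ⟨{k | ∀ i ∈ aperyIdeal w, i + k ∈ aperyIdeal v}, ⟨fun i hi => ?_, ?_⟩, ?_⟩
  · exact (h.le hw hv i).trans hi
  · intro k hk s hs i hi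
    rw [add_comm k s, ← add_assoc]
    exact hk _ (hI.2 i hi s hs)
  · apply subset_antisymm
    · rintro _ ⟨i, hi, k, hk, rfl⟩
      exact hk i hi
    · intro n hn
      obtain ⟨d, hd⟩ := h n
      rw [mem_aperyIdeal] at hn
      have hdn : w d ≤ n := by
        have := hd 0
        rw [hw.zero] at this
        omega
      refine ⟨w d, hw.mem_aperyIdeal d, n - w d, fun i hi => ?_, Nat.add_sub_cancel' hdn⟩
      have hclass : ((i + (n - w d) : ℕ) : ZMod m) = n - d + i := by
        rw [Nat.cast_add, Nat.cast_sub hdn, hw.cast, add_comm]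
      rw [mem_aperyIdeal] at hi
      rw [mem_aperyIdeal, hclass]
      have := hd i
      omega

theorem preceq_aperyIdeal_iff {S : Set ℕ} (hw : IsApery w) (hv : IsApery v)
    (hI : IsNormalizedIdeal S (aperyIdeal w)) :
    Preceq S (aperyIdeal w) (aperyIdeal v) ↔ AperyLE w v :=
  ⟨fun ⟨_, _, h⟩ => aperyLE_of_add_eq hw hv h, AperyLE.preceq hw hv hI⟩

theorem AperyLE.isNormalizedIdeal {S : Set ℕ} (hw : IsApery w) (hv : IsApery v)
    (hI : IsNormalizedIdeal S (aperyIdeal w)) (h : AperyLE w v) :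
    IsNormalizedIdeal S (aperyIdeal v) := by
  obtain ⟨K, hK, hIK⟩ := h.preceq hw hv hI
  rw [← hIK]
  refine ⟨⟨0, hI.1, 0, hK.1, rfl⟩, ?_⟩
  rintro _ ⟨i, hi, k, hk, rfl⟩ s hs
  exact ⟨i, hi, k + s, hK.2 k hk s hs, (add_assoc i k s).symm⟩

theorem exists_isApery [NeZero m] {I : Set ℕ} (h0 : 0 ∈ I) (hm : ∀ i ∈ I, i + m ∈ I)
    (hI : Iᶜ.Finite) : ∃ w : ZMod m → ℕ, IsApery w ∧ I = aperyIdeal w := by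
  have hne (c : ZMod m) : {n | n ∈ I ∧ (n : ZMod m) = c}.Nonempty := by
    have hclass : {n : ℕ | (n : ZMod m) = c}.Infinite := by
      refine (Set.infinite_range_of_injective (f := fun t => c.val + m * t) ?_).mono ?_
      · exact (add_right_injective _).comp (mul_right_injective₀ (NeZero.ne m))
      · rintro _ ⟨t, rfl⟩
        simp
    obtain ⟨n, hnc, hnI⟩ := hclass.exists_notMem_finite hI
    exact ⟨n, not_not.1 hnI, hnc⟩
  have hmul (t : ℕ) : ∀ i ∈ I, i + m * t ∈ I := by
    induction t with
    | zero => simp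
    | succ t ih => exact fun i hi => by simpa [mul_add, add_assoc] using hm _ (ih i hi)
  refine ⟨fun c => sInf {n | n ∈ I ∧ (n : ZMod m) = c},
    ⟨Nat.sInf_eq_zero.2 <| .inl ⟨h0, Nat.cast_zero⟩, fun c => (Nat.sInf_mem (hne c)).2⟩,
    Set.ext fun n => ⟨fun hn => Nat.sInf_le ⟨hn, rfl⟩, fun hn => ?_⟩⟩
  obtain ⟨hmem, hcast⟩ := Nat.sInf_mem (hne n)
  obtain ⟨t, ht⟩ := (Nat.modEq_iff_dvd' hn).1 ((ZMod.natCast_eq_natCast_iff _ _ _).1 hcast)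
  rw [mem_aperyIdeal] at hn
  rw [← Nat.add_sub_cancel' hn, ht]
  exact hmul t _ hmem

end Apery

section MeetsOfLowerCovers

variable {α : Type*}

theorem isGLB_pair_of_forall [Preorder α] {a b c : α} (hca : c ≤ a) (hcb : c ≤ b)
    (h : ∀ d, d ≤ a → d ≤ b → d ≤ c) : IsGLB {a, b} c := by
  simp only [IsGLB, IsGreatest, lowerBounds_insert, lowerBounds_singleton]
  exact ⟨⟨hca, hcb⟩, fun d hd => h d hd.1 hd.2⟩

theorem isLUB_pair_of_forall [Preorder α] {a b c : α} (hac : a ≤ c) (hbc : b ≤ c)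
    (h : ∀ d, a ≤ d → b ≤ d → c ≤ d) : IsLUB {a, b} c :=
  isGLB_pair_of_forall (α := αᵒᵈ) hac hbc h

variable [PartialOrder α] [LocallyFiniteOrder α] {a b s t : α}

-- Reach `s` and `t` from `q` through lower covers of `q`: the meet of the two covers lies above `a`
-- and `b`, so induction applies below the first cover and then below the second.
theorem exists_between_pairs_of_le {q : α}
    (hcov : ∀ q s t : α, s ⋖ q → t ⋖ q → ∃ g, IsGLB {s, t} g) (hs : s ≤ q) (ht : t ≤ q)
    (has : a ≤ s) (hat : a ≤ t) (hbs : b ≤ s) (hbt : b ≤ t) :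
    ∃ c, (a ≤ c ∧ b ≤ c) ∧ c ≤ s ∧ c ≤ t := by
  induction hn : (Finset.Icc a q).card using Nat.strong_induction_on generalizing q s t with
  | _ n ih =>
  subst hn
  have hcard {r : α} (hr : r ⋖ q) : (Finset.Icc a r).card < (Finset.Icc a q).card :=
    Finset.card_lt_card (Finset.Icc_ssubset_Icc_right (has.trans hs) le_rfl hr.lt)
  rcases hs.eq_or_lt with rfl | hsq
  · exact ⟨t, ⟨hat, hbt⟩, ht, le_rfl⟩
  rcases ht.eq_or_lt with rfl | htq
  · exact ⟨s, ⟨has, hbs⟩, le_rfl, hs⟩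
  obtain ⟨s', hss', hs'⟩ := exists_le_covBy_of_lt hsq
  obtain ⟨t', htt', ht'⟩ := exists_le_covBy_of_lt htq
  obtain ⟨g, hg⟩ := hcov q s' t' hs' ht'
  have hgs : g ≤ s' := hg.1 (by simp)
  have hgt : g ≤ t' := hg.1 (by simp)
  have hag : a ≤ g := hg.2 (by simp [has.trans hss', hat.trans htt'])
  have hbg : b ≤ g := hg.2 (by simp [hbs.trans hss', hbt.trans htt'])
  obtain ⟨c, ⟨hac, hbc⟩, hcs, hcg⟩ := ih _ (hcard hs') hss' hgs has hag hbs hbg rfl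
  obtain ⟨d, hd, hdc, hdt⟩ := ih _ (hcard ht') (hcg.trans hgt) htt' hac hat hbc hbt rfl
  exact ⟨d, hd, hdc.trans hcs, hdt⟩

variable [OrderTop α]

theorem exists_isGLB_pair_of_covBy (hcov : ∀ q s t : α, s ⋖ q → t ⋖ q → ∃ g, IsGLB {s, t} g)
    (has : a ≤ s) (hat : a ≤ t) : ∃ g, IsGLB {s, t} g := by
  obtain ⟨g, -, ⟨⟨hag, hgs⟩, hgt⟩, hmax⟩ :=
    ((Set.finite_Icc a s).inter_of_left (Set.Iic t)).exists_le_maximal ⟨⟨le_rfl, has⟩, hat⟩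
  refine ⟨g, isGLB_pair_of_forall hgs hgt fun d hds hdt => ?_⟩
  obtain ⟨c, ⟨hgc, hdc⟩, hcs, hct⟩ :=
    exists_between_pairs_of_le hcov le_top le_top hgs hgt hds hdt
  exact hdc.trans (hmax ⟨⟨hag.trans hgc, hcs⟩, hct⟩ hgc)

theorem exists_isLUB_pair_of_covBy (hcov : ∀ q s t : α, s ⋖ q → t ⋖ q → ∃ g, IsGLB {s, t} g)
    (a b : α) : ∃ m, IsLUB {a, b} m := by
  obtain ⟨m, -, ⟨ham, hbm⟩, hmin⟩ :=
    ((Set.finite_Ici a).inter_of_left (Set.Ici b)).exists_le_minimal ⟨le_top, le_top⟩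
  refine ⟨m, isLUB_pair_of_forall ham hbm fun d had hbd => ?_⟩
  obtain ⟨c, ⟨hac, hbc⟩, hcm, hcd⟩ :=
    exists_between_pairs_of_le hcov le_top le_top ham had hbm hbd
  exact (hmin ⟨hac, hbc⟩ hcm).trans hcd

end MeetsOfLowerCovers

theorem forall_zmod_four {P : ZMod 4 → Prop} : (∀ c, P c) ↔ P 0 ∧ P 1 ∧ P 2 ∧ P 3 :=
  ⟨fun h => ⟨h 0, h 1, h 2, h 3⟩, fun ⟨h0, h1, h2, h3⟩ c => by fin_cases c <;> assumption⟩

theorem exists_zmod_four {P : ZMod 4 → Prop} : (∃ c, P c) ↔ P 0 ∨ P 1 ∨ P 2 ∨ P 3 := by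
  refine ⟨fun ⟨c, hc⟩ => ?_, ?_⟩
  · fin_cases c <;> tauto
  · rintro (h | h | h | h) <;> exact ⟨_, h⟩


/-- The Kunz coordinates of a set of naturals that contains `0` and is stable under adding `4`: its
least elements congruent to `1`, `2`, `3` modulo `4` are `4 * x + 1`, `4 * y + 2`, `4 * z + 3`. -/
@[ext]
structure KunzTriple where
  x : ℕ
  y : ℕ
  z : ℕ

namespace KunzTriple

variable {p q : KunzTriple}

/-- The Apéry set modulo `4` with the given Kunz coordinates. -/
def apery (p : KunzTriple) : ZMod 4 → ℕ := ![0, 4 * p.x + 1, 4 * p.y + 2, 4 * p.z + 3]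

/-- The set of naturals with the given Kunz coordinates. -/
def ideal (p : KunzTriple) : Set ℕ := aperyIdeal p.apery

theorem apery_zero (p : KunzTriple) : p.apery 0 = 0 := rfl
theorem apery_one (p : KunzTriple) : p.apery 1 = 4 * p.x + 1 := rfl
theorem apery_two (p : KunzTriple) : p.apery 2 = 4 * p.y + 2 := rfl
theorem apery_three (p : KunzTriple) : p.apery 3 = 4 * p.z + 3 := rfl

theorem isApery_apery (p : KunzTriple) : IsApery p.apery where
  zero := rfl
  cast := by
    have h4 : (4 : ZMod 4) = 0 := rfl
    simp [forall_zmod_four, apery_zero, apery_one, apery_two, apery_three, h4]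

instance : PartialOrder KunzTriple where
  le p q := AperyLE p.apery q.apery
  le_refl p := .refl p.apery
  le_trans _ _ _ := .trans
  le_antisymm p q hpq hqp := by
    have hapery (c : ZMod 4) : p.apery c = q.apery c :=
      (hqp.le q.isApery_apery p.isApery_apery c).antisymm
        (hpq.le p.isApery_apery q.isApery_apery c)
    have hx := hapery 1
    have hy := hapery 2
    have hz := hapery 3
    simp only [apery_one, apery_two, apery_three] at hx hy hz
    ext <;> omega

-- The three disjunctions are the conditions of `AperyLE` at `c = 1, 2, 3`, with disjuncts indexed
-- by `d = 0, 1, 2, 3`; the condition at `c = 0` is the coordinatewise comparison.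
theorem le_iff : p ≤ q ↔
    (q.x ≤ p.x ∧ q.y ≤ p.y ∧ q.z ≤ p.z) ∧
    (q.y ≤ q.x + p.x ∧ q.z ≤ q.x + p.y ∨ p.x = q.x ∨
      p.y + q.z + 1 ≤ q.x ∧ q.y + p.y ≤ q.x + p.z ∨
      p.z + q.y + 1 ≤ q.x ∧ p.z + q.z + 1 ≤ q.x + p.x) ∧
    (q.z ≤ q.y + p.x ∧ q.x ≤ q.y + p.z + 1 ∨
      q.x + p.x ≤ q.y ∧ q.z + p.x ≤ q.y + p.y ∨ p.y = q.y ∨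
      q.z + p.z + 1 ≤ q.y ∧ q.x + p.z ≤ q.y + p.y) ∧
    (q.x ≤ q.z + p.y + 1 ∧ q.y ≤ q.z + p.z + 1 ∨
      q.y + p.x ≤ q.z ∧ q.x + p.x ≤ q.z + p.z + 1 ∨
      q.x + p.y ≤ q.z ∧ q.y + p.y ≤ q.z + p.x ∨ p.z = q.z) := by
  change AperyLE p.apery q.apery ↔ _
  have hsub : ((0 : ZMod 4) - 1 = 3 ∧ (0 : ZMod 4) - 2 = 2 ∧ (0 : ZMod 4) - 3 = 1) ∧
    ((1 : ZMod 4) - 2 = 3 ∧ (1 : ZMod 4) - 3 = 2 ∧ (2 : ZMod 4) - 1 = 1 ∧ (2 : ZMod 4) - 3 = 3 ∧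
    (3 : ZMod 4) - 1 = 2 ∧ (3 : ZMod 4) - 2 = 1) := by decide
  have hadd : ((1 : ZMod 4) + 1 = 2 ∧ (1 : ZMod 4) + 2 = 3 ∧ (1 : ZMod 4) + 3 = 0) ∧
    ((2 : ZMod 4) + 1 = 3 ∧ (2 : ZMod 4) + 2 = 0 ∧ (2 : ZMod 4) + 3 = 1 ∧ (3 : ZMod 4) + 1 = 0 ∧
    (3 : ZMod 4) + 2 = 1 ∧ (3 : ZMod 4) + 3 = 2) := by decide
  simp only [AperyLE, forall_zmod_four, exists_zmod_four, sub_zero, sub_self, zero_add, add_zero,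
    hsub, hadd, apery_zero, apery_one, apery_two, apery_three]
  refine (and_congr (c := q.x ≤ p.x ∧ q.y ≤ p.y ∧ q.z ≤ p.z) ?_ Iff.rfl).trans
    (and_congr_right fun hle => and_congr ?_ (and_congr ?_ ?_))
  · omega
  all_goals refine or_congr ?_ (or_congr ?_ (or_congr ?_ ?_)) <;> omega

instance : OrderTop KunzTriple where
  top := ⟨0, 0, 0⟩
  le_top p := by simp [le_iff]

noncomputable instance : LocallyFiniteOrder KunzTriple :=
  .ofFiniteIcc fun a b => by
    have hinj : Function.Injective fun p : KunzTriple => (p.x, p.y, p.z) := by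
      rintro ⟨⟩ ⟨⟩ h
      simpa using h
    refine ((Set.finite_Iic (a.x, a.y, a.z)).preimage hinj.injOn).subset fun p hp => ?_
    exact (le_iff.1 hp.1).1

theorem y_le_and_z_le_of_x_lt (h : q.x ≤ q.y + q.z) (hpq : p ≤ q) (hx : q.x < p.x) :
    q.y ≤ q.x + p.x ∧ q.z ≤ q.x + p.y := by
  obtain ⟨⟨-, hy, hz⟩, hone, -, -⟩ := le_iff.1 hpq
  omega

theorem x_le_and_y_le_of_z_lt (h : q.z < q.x + q.y) (hpq : p ≤ q) (hz : q.z < p.z) :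
    q.x ≤ q.z + p.y + 1 ∧ q.y ≤ q.z + p.z + 1 := by
  obtain ⟨⟨hx, hy, -⟩, -, -, hthree⟩ := le_iff.1 hpq
  omega

/-- The element below `q` with the least possible `x > q.x` when `z` is kept: a candidate for a
lower cover. The coordinate `y` changes, to `q.z - q.x`, only when `x` cannot be raised
without it. -/
def predX (q : KunzTriple) : KunzTriple :=
  if q.z ≤ q.x + q.y then ⟨max (q.x + 1) (q.y - q.x), q.y, q.z⟩
  else ⟨if q.y ≤ 2 * q.x then q.z - q.y else q.y - q.x, q.z - q.x, q.z⟩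

/-- The element below `q` with the least possible `z > q.z` when `x` is kept: a candidate for a
lower cover. The coordinate `y` changes, to `q.x - q.z - 1`, only when `z` cannot be raised
without it. -/
def predZ (q : KunzTriple) : KunzTriple :=
  if q.x ≤ q.y + q.z + 1 then ⟨q.x, q.y, max (q.z + 1) (q.y - q.z - 1)⟩
  else ⟨q.x, q.x - q.z - 1, if q.y ≤ 2 * q.z + 1 then q.x - q.y - 1 else q.y - q.z - 1⟩

/-- The element below `q` obtained by raising `y` alone by as little as possible: a candidate for a
lower cover. It has this meaning only if `HasPredY q`. -/
def predY (q : KunzTriple) : KunzTriple :=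
  if q.z ≤ q.x + q.y ∧ q.x ≤ q.y + q.z + 1 then ⟨q.x, q.y + 1, q.z⟩
  else ⟨q.x, max (q.y + 1) (q.x + q.z - q.y), q.z⟩

/-- Some element below `q` differs from it only in `y`, here expressed by inequalities. -/
def HasPredY (q : KunzTriple) : Prop :=
  2 * q.x ≤ q.y ∨ 2 * q.z < q.y ∨ q.z ≤ q.x + q.y ∧ q.x ≤ q.y + q.z + 1

theorem predX_le (q : KunzTriple) : predX q ≤ q := by
  simp only [predX, max_def]
  split_ifs <;> simp only [le_iff] <;> grind (ematch := 0)

theorem predZ_le (q : KunzTriple) : predZ q ≤ q := by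
  simp only [predZ, max_def]
  split_ifs <;> simp only [le_iff] <;> grind (ematch := 0)

theorem predY_le (h : HasPredY q) : predY q ≤ q := by
  unfold HasPredY at h
  simp only [predY, max_def]
  split_ifs <;> simp only [le_iff] <;> grind (ematch := 0)

theorem x_lt_predX (q : KunzTriple) : q.x < (predX q).x := by
  unfold predX
  split_ifs <;> dsimp only <;> omega

theorem z_lt_predZ (q : KunzTriple) : q.z < (predZ q).z := by
  unfold predZ
  split_ifs <;> dsimp only <;> omega

theorem y_lt_predY (q : KunzTriple) : q.y < (predY q).y := by
  unfold predY
  split_ifs <;> dsimp only <;> omega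

theorem predX_z (q : KunzTriple) : (predX q).z = q.z := by
  unfold predX
  split_ifs <;> rfl

theorem predZ_x (q : KunzTriple) : (predZ q).x = q.x := by
  unfold predZ
  split_ifs <;> rfl

theorem predY_x (q : KunzTriple) : (predY q).x = q.x := by
  unfold predY
  split_ifs <;> rfl

theorem predY_z (q : KunzTriple) : (predY q).z = q.z := by
  unfold predY
  split_ifs <;> rfl

theorem le_predX (h : q.x ≤ q.y + q.z) (hpq : p ≤ q) (hx : q.x < p.x) : p ≤ predX q := by
  have hbound := y_le_and_z_le_of_x_lt h hpq hx
  rw [le_iff] at hpq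
  simp only [predX, max_def]
  split_ifs <;> simp only [le_iff] <;> grind (splits := 40) (ematch := 0)

theorem le_predZ (h : q.z < q.x + q.y) (hpq : p ≤ q) (hz : q.z < p.z) : p ≤ predZ q := by
  have hbound := x_le_and_y_le_of_z_lt h hpq hz
  rw [le_iff] at hpq
  simp only [predZ, max_def]
  split_ifs <;> simp only [le_iff] <;> grind (splits := 40) (ematch := 0)

theorem le_predZ_or_le_predY_of_x_eq (h : q.x + q.y ≤ q.z) (hlt : p < q) (hx : p.x = q.x) :
    p ≤ predZ q ∨ HasPredY q ∧ p ≤ predY q := by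
  have hle := le_iff.1 hlt.le
  have hne : p.y ≠ q.y ∨ p.z ≠ q.z := by
    by_contra! heq
    exact hlt.ne (KunzTriple.ext hx heq.1 heq.2)
  simp only [predZ, predY, HasPredY, max_def]
  split_ifs <;> simp only [le_iff] <;> grind (splits := 40) (ematch := 0)

theorem le_predX_or_le_predY_of_z_eq (h : q.y + q.z < q.x) (hlt : p < q) (hz : p.z = q.z) :
    p ≤ predX q ∨ HasPredY q ∧ p ≤ predY q := by
  have hle := le_iff.1 hlt.le
  have hne : p.x ≠ q.x ∨ p.y ≠ q.y := by
    by_contra! heq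
    exact hlt.ne (KunzTriple.ext heq.1 heq.2 hz)
  simp only [predX, predY, HasPredY, max_def]
  split_ifs <;> simp only [le_iff] <;> grind (splits := 40) (ematch := 0)

theorem le_predY_of_x_eq_of_z_eq (hX : q.x ≤ q.y + q.z) (hZ : q.z < q.x + q.y) (hlt : p < q)
    (hx : p.x = q.x) (hz : p.z = q.z) : HasPredY q ∧ p ≤ predY q := by
  have hle := le_iff.1 hlt.le
  have hne : p.y ≠ q.y := fun hy => hlt.ne (KunzTriple.ext hx hy hz)
  simp only [predY, HasPredY, max_def]
  split_ifs <;> simp only [le_iff] <;> grind (splits := 40) (ematch := 0)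

theorem le_pred_of_lt (hlt : p < q) :
    p ≤ predX q ∨ p ≤ predZ q ∨ HasPredY q ∧ p ≤ predY q := by
  obtain ⟨⟨hx, -, hz⟩, -⟩ := le_iff.1 hlt.le
  rcases le_or_gt q.x (q.y + q.z) with hX | hX
  · rcases hx.lt_or_eq with hx | hx
    · exact .inl (le_predX hX hlt.le hx)
    rcases lt_or_ge q.z (q.x + q.y) with hZ | hZ
    · rcases hz.lt_or_eq with hz | hz
      · exact .inr (.inl (le_predZ hZ hlt.le hz))
      · exact .inr (.inr (le_predY_of_x_eq_of_z_eq hX hZ hlt hx.symm hz.symm))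
    · exact .inr (le_predZ_or_le_predY_of_x_eq hZ hlt hx.symm)
  · rcases hz.lt_or_eq with hz | hz
    · exact .inr (.inl (le_predZ (by omega) hlt.le hz))
    · exact (le_predX_or_le_predY_of_z_eq hX hlt hz.symm).imp_right .inr

-- By `le_predX`, both at `q` and at `t`, the elements below `predX q` and `t` are those below `t`
-- with larger `x`, the greatest of which is `predX t`.
theorem isGLB_predX {t : KunzTriple} (h : q.x ≤ q.y + q.z) (ht : t ≤ q) (hx : t.x = q.x) :
    IsGLB {predX q, t} (predX t) := by
  obtain ⟨⟨-, hy, hz⟩, -⟩ := le_iff.1 ht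
  refine isGLB_pair_of_forall (le_predX h ((predX_le t).trans ht) (hx ▸ x_lt_predX t)) (predX_le t)
    fun p hp hpt => le_predX (by omega) hpt ?_
  exact hx ▸ (x_lt_predX q).trans_le (le_iff.1 hp).1.1

theorem isGLB_predZ {t : KunzTriple} (h : q.z < q.x + q.y) (ht : t ≤ q) (hz : t.z = q.z) :
    IsGLB {predZ q, t} (predZ t) := by
  obtain ⟨⟨hx, hy, -⟩, -⟩ := le_iff.1 ht
  refine isGLB_pair_of_forall (le_predZ h ((predZ_le t).trans ht) (hz ▸ z_lt_predZ t)) (predZ_le t)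
    fun p hp hpt => le_predZ (by omega) hpt ?_
  exact hz ▸ (z_lt_predZ q).trans_le (le_iff.1 hp).1.2.2

theorem exists_isGLB_predX_predZ (q : KunzTriple) : ∃ g, IsGLB {predX q, predZ q} g := by
  rcases le_or_gt q.x (q.y + q.z) with h | h
  · exact ⟨_, isGLB_predX h (predZ_le q) (predZ_x q)⟩
  · rw [Set.pair_comm]
    exact ⟨_, isGLB_predZ (by omega) (predX_le q) (predX_z q)⟩

theorem exists_isGLB_predX_predY (hq : HasPredY q) : ∃ g, IsGLB {predX q, predY q} g := by
  rcases le_or_gt q.x (q.y + q.z) with h | h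
  · exact ⟨_, isGLB_predX h (predY_le hq) (predY_x q)⟩
  have hX : predX q = ⟨q.x + 1, q.y, q.z⟩ := by
    rw [predX, if_pos (by omega), max_eq_left (by omega)]
  rcases lt_or_ge (2 * q.z) q.y with hy | hy
  · have hY : predY q = ⟨q.x, max (q.y + 1) (q.x + q.z - q.y), q.z⟩ := by
      grind [predY]
    refine ⟨⟨q.x + 1, max (q.y + 1) (q.x + 1 + q.z - q.y), q.z⟩, ?_⟩
    rw [hX, hY]
    simp only [max_def]
    refine isGLB_pair_of_forall ?_ ?_ fun p hpX hpY => ?_ <;> simp only [le_iff] at * <;>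
      split_ifs at * <;> grind (splits := 40) (ematch := 0)
  · have heq : q.x = q.y + q.z + 1 := by
      unfold HasPredY at hq
      omega
    have hY : predY q = ⟨q.x, q.y + 1, q.z⟩ := by
      rw [predY, if_pos (by omega)]
    refine ⟨⟨q.x + 1, q.y + 1, q.z + 1⟩, ?_⟩
    rw [hX, hY]
    refine isGLB_pair_of_forall ?_ ?_ fun p hpX hpY => ?_ <;> simp only [le_iff] at * <;>
      grind (splits := 40) (ematch := 0)

theorem exists_isGLB_predZ_predY (hq : HasPredY q) : ∃ g, IsGLB {predZ q, predY q} g := by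
  rcases lt_or_ge q.z (q.x + q.y) with h | h
  · exact ⟨_, isGLB_predZ h (predY_le hq) (predY_z q)⟩
  have hZ : predZ q = ⟨q.x, q.y, q.z + 1⟩ := by
    rw [predZ, if_pos (by omega), max_eq_left (by omega)]
  rcases le_or_gt (2 * q.x) q.y with hy | hy
  · have hY : predY q = ⟨q.x, max (q.y + 1) (q.x + q.z - q.y), q.z⟩ := by
      grind [predY]
    refine ⟨⟨q.x, max (q.y + 1) (q.x + q.z + 1 - q.y), q.z + 1⟩, ?_⟩
    rw [hZ, hY]
    simp only [max_def]
    refine isGLB_pair_of_forall ?_ ?_ fun p hpZ hpY => ?_ <;> simp only [le_iff] at * <;>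
      split_ifs at * <;> grind (splits := 40) (ematch := 0)
  · have heq : q.z = q.x + q.y := by
      unfold HasPredY at hq
      omega
    have hY : predY q = ⟨q.x, q.y + 1, q.z⟩ := by
      rw [predY, if_pos (by omega)]
    refine ⟨⟨q.x + 1, q.y + 1, q.z + 1⟩, ?_⟩
    rw [hZ, hY]
    refine isGLB_pair_of_forall ?_ ?_ fun p hpZ hpY => ?_ <;> simp only [le_iff] at * <;>
      grind (splits := 40) (ematch := 0)

theorem predX_lt (q : KunzTriple) : predX q < q :=
  (predX_le q).lt_of_ne fun h => (x_lt_predX q).ne' (congrArg x h)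

theorem predZ_lt (q : KunzTriple) : predZ q < q :=
  (predZ_le q).lt_of_ne fun h => (z_lt_predZ q).ne' (congrArg z h)

theorem predY_lt (h : HasPredY q) : predY q < q :=
  (predY_le h).lt_of_ne fun heq => (y_lt_predY q).ne' (congrArg y heq)

theorem eq_pred_of_covBy {s : KunzTriple} (h : s ⋖ q) :
    s = predX q ∨ s = predZ q ∨ HasPredY q ∧ s = predY q := by
  have eq_of_le {r : KunzTriple} (hsr : s ≤ r) (hr : r < q) : s = r :=
    hsr.eq_of_not_lt fun hlt => h.2 hlt hr
  rcases le_pred_of_lt h.lt with hX | hZ | ⟨hq, hY⟩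
  · exact .inl (eq_of_le hX (predX_lt q))
  · exact .inr (.inl (eq_of_le hZ (predZ_lt q)))
  · exact .inr (.inr ⟨hq, eq_of_le hY (predY_lt hq)⟩)

theorem exists_isGLB_of_covBy {s t : KunzTriple} (hs : s ⋖ q) (ht : t ⋖ q) :
    ∃ g, IsGLB {s, t} g := by
  rcases eq_pred_of_covBy hs with rfl | rfl | ⟨hq, rfl⟩ <;>
    rcases eq_pred_of_covBy ht with rfl | rfl | ⟨hq', rfl⟩
  · exact ⟨predX q, by simp⟩
  · exact exists_isGLB_predX_predZ q
  · exact exists_isGLB_predX_predY hq'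
  · exact Set.pair_comm (predX q) _ ▸ exists_isGLB_predX_predZ q
  · exact ⟨predZ q, by simp⟩
  · exact exists_isGLB_predZ_predY hq'
  · exact Set.pair_comm (predX q) _ ▸ exists_isGLB_predX_predY hq
  · exact Set.pair_comm (predZ q) _ ▸ exists_isGLB_predZ_predY hq
  · exact ⟨predY q, by simp⟩

theorem exists_ideal_eq {I : Set ℕ} (h0 : 0 ∈ I) (h4 : ∀ i ∈ I, i + 4 ∈ I) (hI : Iᶜ.Finite) :
    ∃ p : KunzTriple, p.ideal = I := by
  obtain ⟨w, hw, rfl⟩ := exists_isApery h0 h4 hI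
  have hmod (c : ZMod 4) : w c % 4 = c.val := by rw [← ZMod.val_natCast, hw.cast]
  refine ⟨⟨w 1 / 4, w 2 / 4, w 3 / 4⟩, congrArg aperyIdeal (funext (forall_zmod_four.2 ?_))⟩
  have h1 : w 1 % 4 = 1 := hmod 1
  have h2 : w 2 % 4 = 2 := hmod 2
  have h3 : w 3 % 4 = 3 := hmod 3
  simp only [apery_zero, apery_one, apery_two, apery_three, hw.zero, true_and]
  omega

theorem ideal_injective : Function.Injective ideal := by
  have le_of_ideal_eq {p q : KunzTriple} (h : p.ideal = q.ideal) : p ≤ q :=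
    aperyLE_of_add_eq (K := 0) p.isApery_apery q.isApery_apery ((add_zero p.ideal).trans h)
  exact fun p q h => (le_of_ideal_eq h).antisymm (le_of_ideal_eq h.symm)

variable {o : KunzTriple}

theorem isNormalizedIdeal_ideal_iff (ho : IsNormalizedIdeal o.ideal o.ideal) :
    IsNormalizedIdeal o.ideal p.ideal ↔ o ≤ p := by
  refine ⟨fun hp => ?_, AperyLE.isNormalizedIdeal o.isApery_apery p.isApery_apery ho⟩
  have hadd : o.ideal + p.ideal = p.ideal := by
    refine subset_antisymm ?_ fun i hi => ⟨0, ho.1, i, hi, zero_add i⟩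
    rintro _ ⟨s, hs, i, hi, rfl⟩
    simpa only [add_comm s i] using hp.2 i hi s hs
  exact aperyLE_of_add_eq o.isApery_apery p.isApery_apery hadd

theorem preceq_ideal_iff (ho : IsNormalizedIdeal o.ideal o.ideal) (hp : o ≤ p) :
    Preceq o.ideal p.ideal q.ideal ↔ p ≤ q :=
  preceq_aperyIdeal_iff p.isApery_apery q.isApery_apery ((isNormalizedIdeal_ideal_iff ho).2 hp)

theorem exists_ideal_eq_of_isNormalizedIdeal (hS : IsNumericalSemigroup o.ideal)
    {I : Set ℕ} (hI : IsNormalizedIdeal o.ideal I) : ∃ p, o ≤ p ∧ p.ideal = I := by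
  have h4 : 4 ∈ o.ideal := Nat.zero_le 4
  have hsub : o.ideal ⊆ I := fun s hs => zero_add s ▸ hI.2 0 hI.1 s hs
  obtain ⟨p, rfl⟩ := exists_ideal_eq hI.1 (fun i hi => hI.2 i hi 4 h4)
    (hS.2.2.subset (Set.compl_subset_compl.2 hsub))
  exact ⟨p, (isNormalizedIdeal_ideal_iff ⟨hS.1, hS.2.1⟩).1 hI, rfl⟩

theorem isSupNI_ideal (hS : IsNumericalSemigroup o.ideal) (hp : o ≤ p) (hq : o ≤ q)
    {r : KunzTriple} (h : IsLUB {p, q} r) : IsSupNI o.ideal p.ideal q.ideal r.ideal := by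
  have ho : IsNormalizedIdeal o.ideal o.ideal := ⟨hS.1, hS.2.1⟩
  have hpr : p ≤ r := h.1 (by simp)
  have hqr : q ≤ r := h.1 (by simp)
  refine ⟨(isNormalizedIdeal_ideal_iff ho).2 (hp.trans hpr), (preceq_ideal_iff ho hp).2 hpr,
    (preceq_ideal_iff ho hq).2 hqr, fun L hL hpL hqL => ?_⟩
  obtain ⟨l, -, rfl⟩ := exists_ideal_eq_of_isNormalizedIdeal hS hL
  rw [preceq_ideal_iff ho hp] at hpL
  rw [preceq_ideal_iff ho hq] at hqL
  exact (preceq_ideal_iff ho (hp.trans hpr)).2 (h.2 (by simp [hpL, hqL]))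

theorem isInfNI_ideal (hS : IsNumericalSemigroup o.ideal) (hp : o ≤ p) (hq : o ≤ q)
    {r : KunzTriple} (h : IsGLB {p, q} r) : IsInfNI o.ideal p.ideal q.ideal r.ideal := by
  have ho : IsNormalizedIdeal o.ideal o.ideal := ⟨hS.1, hS.2.1⟩
  have hor : o ≤ r := h.2 (by simp [hp, hq])
  refine ⟨(isNormalizedIdeal_ideal_iff ho).2 hor, (preceq_ideal_iff ho hor).2 (h.1 (by simp)),
    (preceq_ideal_iff ho hor).2 (h.1 (by simp)), fun L hL hLp hLq => ?_⟩
  obtain ⟨l, hl, rfl⟩ := exists_ideal_eq_of_isNormalizedIdeal hS hL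
  rw [preceq_ideal_iff ho hl] at hLp hLq ⊢
  exact h.2 (by simp [hLp, hLq])

theorem niLattice_ideal (hS : IsNumericalSemigroup o.ideal) : NILattice o.ideal := by
  intro I J hI hJ
  obtain ⟨p, hp, rfl⟩ := exists_ideal_eq_of_isNormalizedIdeal hS hI
  obtain ⟨q, hq, rfl⟩ := exists_ideal_eq_of_isNormalizedIdeal hS hJ
  obtain ⟨j, hj⟩ := exists_isLUB_pair_of_covBy (fun _ _ _ => exists_isGLB_of_covBy) p q
  obtain ⟨g, hg⟩ := exists_isGLB_pair_of_covBy (fun _ _ _ => exists_isGLB_of_covBy) hp hq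
  exact ⟨⟨_, isSupNI_ideal hS hp hq hj⟩, ⟨_, isInfNI_ideal hS hp hq hg⟩⟩

theorem pos_of_multNS_ideal_eq_four (hm : multNS o.ideal = 4) : 0 < o.x ∧ 0 < o.y ∧ 0 < o.z := by
  have hge (c : ZMod 4) (hc : o.apery c ≠ 0) : 4 ≤ o.apery c :=
    hm.symm.trans_le (Nat.sInf_le ⟨o.isApery_apery.mem_aperyIdeal c, hc⟩)
  have h1 := hge 1
  have h2 := hge 2
  have h3 := hge 3
  simp only [apery_one, apery_two, apery_three] at h1 h2 h3
  omega

theorem le_of_pos_of_le_one (ho : 0 < o.x ∧ 0 < o.y ∧ 0 < o.z)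
    (hp : p.x ≤ 1 ∧ p.y ≤ 1 ∧ p.z ≤ 1) : o ≤ p := by
  rw [le_iff]
  omega

theorem exists_not_distributive (ho : 0 < o.x ∧ 0 < o.y ∧ 0 < o.z) :
    ∃ i j k jk ij ik l r : KunzTriple, (o ≤ i ∧ o ≤ j ∧ o ≤ k) ∧
      IsLUB {j, k} jk ∧ IsGLB {i, jk} l ∧
      IsGLB {i, j} ij ∧ IsGLB {i, k} ik ∧ IsLUB {ij, ik} r ∧ l ≠ r := by
  have hjoin : IsLUB {(⟨0, 0, 1⟩ : KunzTriple), ⟨0, 1, 0⟩} ⟨0, 0, 0⟩ := by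
    refine isLUB_pair_of_forall ?_ ?_ fun p hj hk => ?_ <;> simp only [le_iff] at * <;> omega
  have hmeet_top : IsGLB {(⟨1, 0, 1⟩ : KunzTriple), ⟨0, 0, 0⟩} ⟨1, 0, 1⟩ :=
    isGLB_pair_of_forall le_rfl le_top fun p hi _ => hi
  have hmeet_j : IsGLB {(⟨1, 0, 1⟩ : KunzTriple), ⟨0, 0, 1⟩} ⟨1, 1, 1⟩ := by
    refine isGLB_pair_of_forall ?_ ?_ fun p hi hj => ?_ <;> simp only [le_iff] at * <;> omega
  have hmeet_k : IsGLB {(⟨1, 0, 1⟩ : KunzTriple), ⟨0, 1, 0⟩} ⟨1, 1, 1⟩ := by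
    refine isGLB_pair_of_forall ?_ ?_ fun p hi hk => ?_ <;> simp only [le_iff] at * <;> omega
  refine ⟨_, _, _, _, _, _, _, ⟨1, 1, 1⟩, ⟨?_, ?_, ?_⟩, hjoin, hmeet_top, hmeet_j, hmeet_k,
    by simp, by simp⟩ <;> exact le_of_pos_of_le_one ho (by simp)

end KunzTriple

/-- if `S` has multiplicity four, then `(𝔑(S), ⪯)` is a lattice
that is not distributive. -/
theorem NILattice_not_distributive_of_mult_four (S : Set ℕ)
    (hS : IsNumericalSemigroup S) (hm : multNS S = 4) :
    NILattice S ∧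
    ∃ I J K JK IJ IK L R : Set ℕ,
      IsNormalizedIdeal S I ∧ IsNormalizedIdeal S J ∧ IsNormalizedIdeal S K ∧
      IsSupNI S J K JK ∧ IsInfNI S I JK L ∧
      IsInfNI S I J IJ ∧ IsInfNI S I K IK ∧ IsSupNI S IJ IK R ∧ L ≠ R := by
  have h4 : 4 ∈ S := hm ▸ (Nat.sInf_mem (Nat.nonempty_of_pos_sInf (hm ▸ four_pos))).1
  obtain ⟨o, rfl⟩ := KunzTriple.exists_ideal_eq hS.1 (fun i hi => hS.2.1 i hi 4 h4) hS.2.2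
  obtain ⟨i, j, k, jk, ij, ik, l, r, ⟨hi, hj, hk⟩, hjk, hl, hij, hik, hr, hne⟩ :=
    KunzTriple.exists_not_distributive (KunzTriple.pos_of_multNS_ideal_eq_four hm)
  have ho : IsNormalizedIdeal o.ideal o.ideal := ⟨hS.1, hS.2.1⟩
  have hojk : o ≤ jk := hj.trans (hjk.1 (by simp))
  have hoij : o ≤ ij := hij.2 (by simp [hi, hj])
  have hoik : o ≤ ik := hik.2 (by simp [hi, hk])
  exact ⟨KunzTriple.niLattice_ideal hS,
    i.ideal, j.ideal, k.ideal, jk.ideal, ij.ideal, ik.ideal, l.ideal, r.ideal,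
    (KunzTriple.isNormalizedIdeal_ideal_iff ho).2 hi,
    (KunzTriple.isNormalizedIdeal_ideal_iff ho).2 hj,
    (KunzTriple.isNormalizedIdeal_ideal_iff ho).2 hk,
    KunzTriple.isSupNI_ideal hS hj hk hjk, KunzTriple.isInfNI_ideal hS hi hojk hl,
    KunzTriple.isInfNI_ideal hS hi hj hij, KunzTriple.isInfNI_ideal hS hi hk hik,
    KunzTriple.isSupNI_ideal hS hoij hoik hr, KunzTriple.ideal_injective.ne hne⟩
end

section
/- Let T be the numerical semigroup generated by {3, 7, 8}, i.e., T = {0, 3} ∪ {n ∈ ℕ : n ≥ 6}. Then the lattice (𝔑(T), ⪯) is not distributive; in fact, the set {T, {0,4}+T, {0,4,5}+T, {0,1,5}+T, {0,1}+T} is a sublattice of (𝔑(T), ⪯) isomorphic to the pentagon N_5. -/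
open Pointwise

/-! Divisibility `I ⪯ J` forces more than inclusion: if `b ∈ J` and `0` is the only element of `I`
up to `b`, then in `I + K = J` the element `b` must come from `K`, so `I + b ⊆ J`. For an ideal `I`
with `4 ∈ I`, `1 ∉ I` and for `b = 1` this gives `5 ∈ J`. Hence an ideal dividing both
`{0, 4, 5} + T = ℕ \ {1, 2}` and `{0, 1} + T = ℕ \ {2, 5}` omits `4` and is therefore `T`, while a
common multiple of `{0, 4} + T` and `{0, 1} + T` contains `{0, 1, 5} + T = ℕ \ {2}` and is therefore
that ideal or `ℕ`. Together with `{0, 4} + T ⪯ {0, 4, 5} + T ⪯ {0, 1, 5} + T`, these two facts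
formally imply the remaining relations of the pentagon. -/

namespace IsNormalizedIdeal

variable {S I X : Set ℕ}

theorem subset (hI : IsNormalizedIdeal S I) : S ⊆ I := fun s hs => by
  simpa only [zero_add] using hI.2 0 hI.1 s hs

theorem add_subset (hI : IsNormalizedIdeal S I) (hX : X ⊆ I) : X + S ⊆ I :=
  Set.add_subset_iff.2 fun x hx s hs => hI.2 x (hX hx) s hs

theorem add_eq (hI : IsNormalizedIdeal S I) (h0 : 0 ∈ S) : I + S = I :=
  (hI.add_subset subset_rfl).antisymm (Set.subset_add_left I h0)

theorem add_left (hI : IsNormalizedIdeal S I) (h0 : 0 ∈ X) : IsNormalizedIdeal S (X + I) := by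
  refine ⟨Set.subset_add_right I h0 hI.1, ?_⟩
  rintro _ ⟨x, hx, i, hi, rfl⟩ s hs
  exact ⟨x, hx, i + s, hI.2 i hi s hs, (add_assoc x i s).symm⟩

theorem preceq_add_left (hI : IsNormalizedIdeal S I) (hS : IsNormalizedIdeal S S) (h0 : 0 ∈ X) :
    Preceq S I (X + I) :=
  ⟨X + S, hS.add_left h0, by rw [add_left_comm, hI.add_eq hS.1]⟩

theorem preceq_univ (hI : IsNormalizedIdeal S I) : Preceq S I Set.univ :=
  ⟨Set.univ, ⟨trivial, fun _ _ _ _ => trivial⟩,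
    Set.univ_subset_iff.1 (Set.subset_add_right Set.univ hI.1)⟩

-- The neutral summand is the colon ideal `I - I = {k | I + k ⊆ I}`.
theorem preceq_refl (hI : IsNormalizedIdeal S I) : Preceq S I I := by
  let multipliers : Set ℕ := {k | ∀ i ∈ I, i + k ∈ I}
  have h0 : 0 ∈ multipliers := fun i hi => hi
  refine ⟨multipliers, ⟨h0, fun k hk s hs i hi => ?_⟩, ?_⟩
  · rw [← add_assoc]
    exact hI.2 _ (hk i hi) s hs
  · exact (Set.add_subset_iff.2 fun i hi k (hk : k ∈ multipliers) => hk i hi).antisymm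
      (Set.subset_add_left I h0)

end IsNormalizedIdeal

namespace Preceq

variable {S I J K : Set ℕ} {a b : ℕ}

theorem subset (h : Preceq S I J) : I ⊆ J := by
  obtain ⟨K, hK, rfl⟩ := h
  exact Set.subset_add_left I hK.1

theorem trans (hIJ : Preceq S I J) (hJK : Preceq S J K) : Preceq S I K := by
  obtain ⟨M, hM, rfl⟩ := hIJ
  obtain ⟨N, hN, rfl⟩ := hJK
  exact ⟨M + N, hN.add_left hM.1, (add_assoc I M N).symm⟩

theorem add_mem_of_forall_le_eq_zero (h : Preceq S I J) (ha : a ∈ I) (hb : b ∈ J)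
    (hI : ∀ i ∈ I, i ≤ b → i = 0) : a + b ∈ J := by
  obtain ⟨K, -, rfl⟩ := h
  obtain ⟨i, hi, k, hk, rfl⟩ := hb
  obtain rfl : i = 0 := hI i hi (Nat.le_add_right i k)
  exact ⟨a, ha, k, hk, by simp only [zero_add]⟩

theorem isInfNI_left (h : Preceq S I J) (hI : IsNormalizedIdeal S I) : IsInfNI S I J I :=
  ⟨hI, hI.preceq_refl, h, fun _ _ hLI _ => hLI⟩

theorem isInfNI_right (h : Preceq S J I) (hJ : IsNormalizedIdeal S J) : IsInfNI S I J J :=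
  ⟨hJ, h, hJ.preceq_refl, fun _ _ _ hLJ => hLJ⟩

theorem isSupNI_left (h : Preceq S J I) (hI : IsNormalizedIdeal S I) : IsSupNI S I J I :=
  ⟨hI, hI.preceq_refl, h, fun _ _ hIL _ => hIL⟩

end Preceq

/-- The configuration `bot ⪯ a ⪯ b ⪯ top` with a fifth ideal `c` that generates a pentagon `N₅` in
`(𝔑(S), ⪯)`. The encoding records only the meet `b ∧ c = bot` and the join `a ∨ c = top`: the other
meet and join, incomparability with `c` and distinctness of the five ideals follow. -/
structure IsPentagonNI (S bot a b c top : Set ℕ) : Prop where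
  ideal_a : IsNormalizedIdeal S a
  ideal_b : IsNormalizedIdeal S b
  ideal_c : IsNormalizedIdeal S c
  bot_preceq_a : Preceq S bot a
  a_preceq_b : Preceq S a b
  b_preceq_top : Preceq S b top
  not_b_preceq_a : ¬ Preceq S b a
  isInfNI_b_c : IsInfNI S b c bot
  isSupNI_a_c : IsSupNI S a c top

namespace IsPentagonNI

variable {S bot a b c top : Set ℕ}

theorem isInfNI_a_c (h : IsPentagonNI S bot a b c top) : IsInfNI S a c bot := by
  obtain ⟨hbot, -, hbot_c, hgreatest⟩ := h.isInfNI_b_c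
  exact ⟨hbot, h.bot_preceq_a, hbot_c, fun L hL hLa => hgreatest L hL (hLa.trans h.a_preceq_b)⟩

theorem isSupNI_b_c (h : IsPentagonNI S bot a b c top) : IsSupNI S b c top := by
  obtain ⟨htop, -, hc_top, hleast⟩ := h.isSupNI_a_c
  exact ⟨htop, h.b_preceq_top, hc_top, fun L hL hbL => hleast L hL (h.a_preceq_b.trans hbL)⟩

theorem not_a_preceq_c (h : IsPentagonNI S bot a b c top) : ¬ Preceq S a c := fun hac => by
  have htop_c : Preceq S top c := h.isSupNI_a_c.2.2.2 c h.ideal_c hac h.ideal_c.preceq_refl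
  have hb_bot : Preceq S b bot :=
    h.isInfNI_b_c.2.2.2 b h.ideal_b h.ideal_b.preceq_refl (h.b_preceq_top.trans htop_c)
  exact h.not_b_preceq_a (hb_bot.trans h.bot_preceq_a)

theorem not_c_preceq_b (h : IsPentagonNI S bot a b c top) : ¬ Preceq S c b := fun hcb => by
  have hc_bot : Preceq S c bot := h.isInfNI_b_c.2.2.2 c h.ideal_c hcb h.ideal_c.preceq_refl
  have htop_a : Preceq S top a :=
    h.isSupNI_a_c.2.2.2 a h.ideal_a h.ideal_a.preceq_refl (hc_bot.trans h.bot_preceq_a)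
  exact h.not_b_preceq_a (h.b_preceq_top.trans htop_a)

theorem incomparable (h : IsPentagonNI S bot a b c top) :
    ¬ Preceq S a c ∧ ¬ Preceq S c a ∧ ¬ Preceq S b c ∧ ¬ Preceq S c b :=
  ⟨h.not_a_preceq_c, fun hca => h.not_c_preceq_b (hca.trans h.a_preceq_b),
    fun hbc => h.not_a_preceq_c (h.a_preceq_b.trans hbc), h.not_c_preceq_b⟩

theorem pairwise_ne (h : IsPentagonNI S bot a b c top) :
    bot ≠ a ∧ bot ≠ b ∧ bot ≠ c ∧ bot ≠ top ∧ a ≠ b ∧ a ≠ c ∧ a ≠ top ∧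
      b ≠ c ∧ b ≠ top ∧ c ≠ top := by
  obtain ⟨hac, hca, hbc, hcb⟩ := h.incomparable
  obtain ⟨-, -, hbot_c, -⟩ := h.isInfNI_b_c
  obtain ⟨-, ha_top, hc_top, -⟩ := h.isSupNI_a_c
  refine ⟨?_, ?_, ?_, ?_, ?_, ?_, ?_, ?_, ?_, ?_⟩ <;> rintro rfl
  · exact hac hbot_c
  · exact hbc hbot_c
  · exact hca h.bot_preceq_a
  · exact hac (ha_top.trans hbot_c)
  · exact h.not_b_preceq_a h.ideal_a.preceq_refl
  · exact hac h.ideal_a.preceq_refl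
  · exact hca hc_top
  · exact hbc h.ideal_b.preceq_refl
  · exact hcb hc_top
  · exact hac ha_top

-- `b ∧ (a ∨ c) = b ∧ top = b`, whereas `(b ∧ a) ∨ (b ∧ c) = a ∨ bot = a`.
theorem exists_not_distrib (h : IsPentagonNI S bot a b c top) :
    ∃ I J K JK IJ IK L R : Set ℕ,
      IsNormalizedIdeal S I ∧ IsNormalizedIdeal S J ∧ IsNormalizedIdeal S K ∧
      IsSupNI S J K JK ∧ IsInfNI S I JK L ∧
      IsInfNI S I J IJ ∧ IsInfNI S I K IK ∧ IsSupNI S IJ IK R ∧ L ≠ R := by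
  obtain ⟨-, -, -, -, hab, -⟩ := h.pairwise_ne
  exact ⟨b, a, c, top, a, bot, b, a, h.ideal_b, h.ideal_a, h.ideal_c, h.isSupNI_a_c,
    h.b_preceq_top.isInfNI_left h.ideal_b, h.a_preceq_b.isInfNI_right h.ideal_a, h.isInfNI_b_c,
    h.bot_preceq_a.isSupNI_left h.ideal_a, hab.symm⟩

end IsPentagonNI

theorem mem_singleton_add_iff {a n : ℕ} {I : Set ℕ} : n ∈ {a} + I ↔ a ≤ n ∧ n - a ∈ I := by
  rw [Set.singleton_add, Set.mem_image]
  constructor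
  · rintro ⟨i, hi, rfl⟩
    exact ⟨Nat.le_add_right a i, by rwa [Nat.add_sub_cancel_left]⟩
  · exact fun ⟨han, hi⟩ => ⟨n - a, hi, Nat.add_sub_of_le han⟩

theorem mem_insert_add_iff {a n : ℕ} {X I : Set ℕ} :
    n ∈ insert a X + I ↔ (a ≤ n ∧ n - a ∈ I) ∨ n ∈ X + I := by
  rw [Set.insert_eq, Set.union_add, Set.mem_union, mem_singleton_add_iff]

/-- The numerical semigroup `⟨3, 7, 8⟩`, the base semigroup of the pentagon example. -/
def pentagonSemigroup : Set ℕ := {0, 3} ∪ {n : ℕ | 6 ≤ n}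

namespace pentagonSemigroup

local notation "T" => pentagonSemigroup

theorem eq_compl : T = {1, 2, 4, 5}ᶜ := by
  ext n
  simp only [pentagonSemigroup, Set.mem_union, Set.mem_insert_iff, Set.mem_singleton_iff,
    Set.mem_ofPred_eq, Set.mem_compl_iff]
  omega

theorem zero_four_add_eq_compl : {0, 4} + T = {1, 2, 5}ᶜ := by
  ext n
  grind [eq_compl, mem_insert_add_iff, mem_singleton_add_iff]

theorem zero_four_five_add_eq_compl : {0, 4, 5} + T = {1, 2}ᶜ := by
  ext n
  grind [eq_compl, mem_insert_add_iff, mem_singleton_add_iff]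

theorem zero_one_add_eq_compl : {0, 1} + T = {2, 5}ᶜ := by
  ext n
  grind [eq_compl, mem_insert_add_iff, mem_singleton_add_iff]

theorem zero_one_five_add_eq_compl : {0, 1, 5} + T = {2}ᶜ := by
  ext n
  grind (splits := 12) [eq_compl, mem_insert_add_iff, mem_singleton_add_iff]

theorem isNormalizedIdeal_self : IsNormalizedIdeal T T := by
  rw [eq_compl]
  exact ⟨by simp, by grind⟩

theorem zero_four_preceq_zero_four_five : Preceq T ({0, 4} + T) ({0, 4, 5} + T) := by
  have hsum : {0, 5} + ({0, 4} + T) = {0, 4, 5} + T := by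
    rw [zero_four_add_eq_compl, zero_four_five_add_eq_compl]
    ext n
    grind [mem_insert_add_iff, mem_singleton_add_iff]
  rw [← hsum]
  exact (isNormalizedIdeal_self.add_left (by simp)).preceq_add_left isNormalizedIdeal_self (by simp)

theorem zero_four_five_preceq_zero_one_five : Preceq T ({0, 4, 5} + T) ({0, 1, 5} + T) := by
  have hsum : {0, 1} + ({0, 4, 5} + T) = {0, 1, 5} + T := by
    rw [zero_four_five_add_eq_compl, zero_one_five_add_eq_compl]
    ext n
    grind [mem_insert_add_iff, mem_singleton_add_iff]
  rw [← hsum]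
  exact (isNormalizedIdeal_self.add_left (by simp)).preceq_add_left isNormalizedIdeal_self (by simp)

theorem zero_one_preceq_zero_one_five : Preceq T ({0, 1} + T) ({0, 1, 5} + T) := by
  have hsum : {0, 5} + ({0, 1} + T) = {0, 1, 5} + T := by
    rw [zero_one_add_eq_compl, zero_one_five_add_eq_compl]
    ext n
    grind [mem_insert_add_iff, mem_singleton_add_iff]
  rw [← hsum]
  exact (isNormalizedIdeal_self.add_left (by simp)).preceq_add_left isNormalizedIdeal_self (by simp)

theorem isInfNI_zero_four_five_zero_one : IsInfNI T ({0, 4, 5} + T) ({0, 1} + T) T := by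
  refine ⟨isNormalizedIdeal_self,
    isNormalizedIdeal_self.preceq_add_left isNormalizedIdeal_self (by simp),
    isNormalizedIdeal_self.preceq_add_left isNormalizedIdeal_self (by simp),
    fun L hL hL_left hL_right => ?_⟩
  have hL_subset_left : L ⊆ {1, 2}ᶜ := zero_four_five_add_eq_compl ▸ hL_left.subset
  rw [zero_one_add_eq_compl] at hL_right
  have hL_subset_right : L ⊆ {2, 5}ᶜ := hL_right.subset
  have hfour_notMem : 4 ∉ L := fun hfour => by
    have hfive : 4 + 1 ∈ ({2, 5}ᶜ : Set ℕ) :=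
      hL_right.add_mem_of_forall_le_eq_zero hfour (by simp) (by grind)
    simp at hfive
  have hL_subset : L ⊆ T := by
    rw [eq_compl]
    grind
  rw [hL_subset.antisymm hL.subset]
  exact isNormalizedIdeal_self.preceq_refl

theorem isSupNI_zero_four_zero_one : IsSupNI T ({0, 4} + T) ({0, 1} + T) ({0, 1, 5} + T) := by
  refine ⟨isNormalizedIdeal_self.add_left (by simp),
    zero_four_preceq_zero_four_five.trans zero_four_five_preceq_zero_one_five,
    zero_one_preceq_zero_one_five, fun L hL hL_four hL_one => ?_⟩
  have hone : 1 ∈ L := hL_one.subset (by simp [zero_one_add_eq_compl])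
  rw [zero_four_add_eq_compl] at hL_four
  have hfive : 4 + 1 ∈ L :=
    hL_four.add_mem_of_forall_le_eq_zero (by simp) hone (by grind)
  have hsubset : {0, 1, 5} + T ⊆ L :=
    hL.add_subset (by simp [Set.insert_subset_iff, hL.1, hone, hfive])
  have hL_cases : L = Set.univ ∨ L = {0, 1, 5} + T := by
    rw [zero_one_five_add_eq_compl] at hsubset ⊢
    exact (Set.isCoatom_singleton_compl 2).le_iff.1 hsubset
  rcases hL_cases with rfl | rfl
  · exact (isNormalizedIdeal_self.add_left (by simp)).preceq_univ
  · exact hL.preceq_refl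

theorem isPentagonNI :
    IsPentagonNI T T ({0, 4} + T) ({0, 4, 5} + T) ({0, 1} + T) ({0, 1, 5} + T) where
  ideal_a := isNormalizedIdeal_self.add_left (by simp)
  ideal_b := isNormalizedIdeal_self.add_left (by simp)
  ideal_c := isNormalizedIdeal_self.add_left (by simp)
  bot_preceq_a := isNormalizedIdeal_self.preceq_add_left isNormalizedIdeal_self (by simp)
  a_preceq_b := zero_four_preceq_zero_four_five
  b_preceq_top := zero_four_five_preceq_zero_one_five
  not_b_preceq_a h := by
    have hfive : 5 ∈ {0, 4} + T := h.subset (by simp [zero_four_five_add_eq_compl])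
    simp [zero_four_add_eq_compl] at hfive
  isInfNI_b_c := isInfNI_zero_four_five_zero_one
  isSupNI_a_c := isSupNI_zero_four_zero_one

end pentagonSemigroup

/-- for `T = ⟨3,7,8⟩ = {0,3} ∪ {n ≥ 6}`, the lattice `(𝔑(T), ⪯)`
is not distributive; in fact `{T, {0,4}+T, {0,4,5}+T, {0,1,5}+T, {0,1}+T}` is a
sublattice of `(𝔑(T), ⪯)` isomorphic to the pentagon `N₅`. -/
theorem pentagon_sublattice (T : Set ℕ) (hT : T = {0, 3} ∪ {n : ℕ | 6 ≤ n}) :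
    (∃ I J K JK IJ IK L R : Set ℕ,
      IsNormalizedIdeal T I ∧ IsNormalizedIdeal T J ∧ IsNormalizedIdeal T K ∧
      IsSupNI T J K JK ∧ IsInfNI T I JK L ∧
      IsInfNI T I J IJ ∧ IsInfNI T I K IK ∧ IsSupNI T IJ IK R ∧ L ≠ R) ∧
    ∃ z x y w t : Set ℕ,
      ({z, x, y, w, t} : Set (Set ℕ)) =
        {T, ({0, 4} : Set ℕ) + T, ({0, 4, 5} : Set ℕ) + T,
          ({0, 1, 5} : Set ℕ) + T, ({0, 1} : Set ℕ) + T} ∧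
      (z ≠ x ∧ z ≠ y ∧ z ≠ w ∧ z ≠ t ∧ x ≠ y ∧ x ≠ w ∧ x ≠ t ∧
        y ≠ w ∧ y ≠ t ∧ w ≠ t) ∧
      (IsNormalizedIdeal T z ∧ IsNormalizedIdeal T x ∧ IsNormalizedIdeal T y ∧
        IsNormalizedIdeal T w ∧ IsNormalizedIdeal T t) ∧
      (Preceq T z x ∧ Preceq T x y ∧ Preceq T y t) ∧
      (¬ Preceq T x w ∧ ¬ Preceq T w x ∧ ¬ Preceq T y w ∧ ¬ Preceq T w y) ∧
      (IsInfNI T x w z ∧ IsInfNI T y w z ∧ IsSupNI T x w t ∧ IsSupNI T y w t) := by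
  obtain rfl : T = pentagonSemigroup := hT
  have h := pentagonSemigroup.isPentagonNI
  refine ⟨h.exists_not_distrib, _, _, _, _, _, ?_, h.pairwise_ne,
    ⟨h.isInfNI_b_c.1, h.ideal_a, h.ideal_b, h.ideal_c, h.isSupNI_a_c.1⟩,
    ⟨h.bot_preceq_a, h.a_preceq_b, h.b_preceq_top⟩, h.incomparable,
    h.isInfNI_a_c, h.isInfNI_b_c, h.isSupNI_a_c, h.isSupNI_b_c⟩
  rw [Set.pair_comm ({0, 1} + pentagonSemigroup)]
end

section
/- Let S be a numerical semigroup and let I ∈ 𝔑(S). Then I is ∪-irreducible (i.e., I cannot be written as I = J ∪ K with J, K ∈ 𝔑(S) \ {I}) if and only if I = S or I = {0, g} + S for some gap g of S. -/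
open Pointwise

/-!
Normalized ideals contain `S`, and any ideal containing `g` contains `{0, g} + S`; so if
`{0, g} + S = J ∪ K`, then whichever of `J`, `K` contains `g` is everything. Conversely, let `g` be
minimal in `I \ S`. An equation `g = i + s` with `i ∈ I`, `s ∈ S` and `i ≠ g` would give `i < g`,
hence `i ∈ S` and `g ∈ S`; so `I \ {g}` is still an ideal, and `I = ({0, g} + S) ∪ (I \ {g})`.
-/

section AddMonoid

variable {M : Type*} [AddMonoid M]

/-- `IsNormalizedIdeal` over an arbitrary additive monoid. When `M` is canonically ordered, `0 ∈ I`
says that `0` is the least element of `I`. -/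
def IsNormalizedRelIdeal (S I : Set M) : Prop :=
  0 ∈ I ∧ ∀ i ∈ I, ∀ s ∈ S, i + s ∈ I

/-- `∪`-irreducibility among the normalized ideals of `S`; that `I` is
itself a normalized ideal is not part of the definition, and `I = S` is allowed. -/
def UnionIrreducible (S I : Set M) : Prop :=
  ¬ ∃ J K : Set M, IsNormalizedRelIdeal S J ∧ IsNormalizedRelIdeal S K ∧
    J ≠ I ∧ K ≠ I ∧ I = J ∪ K

variable {S I : Set M} {g : M}

theorem IsNormalizedRelIdeal.subset (hI : IsNormalizedRelIdeal S I) : S ⊆ I :=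
  fun s hs ↦ by simpa only [zero_add] using hI.2 0 hI.1 s hs

theorem IsNormalizedRelIdeal.pair_add_subset (hI : IsNormalizedRelIdeal S I) (hg : g ∈ I) :
    ({0, g} : Set M) + S ⊆ I := by
  rintro _ ⟨_, rfl | rfl, s, hs, rfl⟩
  · exact hI.2 0 hI.1 s hs
  · exact hI.2 _ hg s hs

theorem mem_pair_add_self (hS : 0 ∈ S) : g ∈ ({0, g} : Set M) + S :=
  ⟨g, Set.mem_insert_of_mem 0 rfl, 0, hS, add_zero g⟩

theorem IsNormalizedRelIdeal.eq_pair_add_union_sdiff_singleton (hI : IsNormalizedRelIdeal S I)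
    (hS : 0 ∈ S) (hg : g ∈ I) : I = (({0, g} : Set M) + S) ∪ (I \ {g}) := by
  refine Set.Subset.antisymm (fun x hx ↦ ?_)
    (Set.union_subset (hI.pair_add_subset hg) Set.sdiff_subset)
  rcases eq_or_ne x g with rfl | hxg
  · exact Or.inl (mem_pair_add_self hS)
  · exact Or.inr ⟨hx, hxg⟩

theorem unionIrreducible_self (S : Set M) : UnionIrreducible S S := by
  rintro ⟨J, K, hJ, -, hJne, -, hJK⟩
  exact hJne ((hJK ▸ Set.subset_union_left).antisymm hJ.subset)

theorem unionIrreducible_pair_add (hS : 0 ∈ S) (g : M) :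
    UnionIrreducible S (({0, g} : Set M) + S) := by
  rintro ⟨J, K, hJ, hK, hJne, hKne, hJK⟩
  have hg : g ∈ J ∪ K := hJK ▸ mem_pair_add_self hS
  rcases hg with hgJ | hgK
  · exact hJne ((hJK ▸ Set.subset_union_left).antisymm (hJ.pair_add_subset hgJ))
  · exact hKne ((hJK ▸ Set.subset_union_right).antisymm (hK.pair_add_subset hgK))

theorem isNormalizedRelIdeal_add (S : AddSubmonoid M) {X : Set M} (hX : 0 ∈ X) :
    IsNormalizedRelIdeal (S : Set M) (X + (S : Set M)) := by
  refine ⟨⟨0, hX, 0, S.zero_mem, add_zero 0⟩, ?_⟩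
  rintro _ ⟨x, hx, t, ht, rfl⟩ s hs
  exact ⟨x, hx, t + s, S.add_mem ht hs, (add_assoc x t s).symm⟩

end AddMonoid

section CanonicallyOrdered

variable {M : Type*} [AddMonoid M] [PartialOrder M] [CanonicallyOrderedAdd M]
  {S : AddSubmonoid M} {I : Set M} {g : M}

theorem IsNormalizedRelIdeal.sdiff_singleton (hI : IsNormalizedRelIdeal (S : Set M) I)
    (hg : Minimal (· ∈ I \ S) g) : IsNormalizedRelIdeal (S : Set M) (I \ {g}) := by
  have hgS : g ∉ S := hg.prop.2
  refine ⟨⟨hI.1, fun h0g : 0 = g ↦ hgS (h0g ▸ S.zero_mem)⟩, ?_⟩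
  rintro i ⟨hi, hig : i ≠ g⟩ s hs
  refine ⟨hI.2 i hi s hs, fun hisg : i + s = g ↦ hgS ?_⟩
  have hlt : i < g := lt_of_le_of_ne (hisg ▸ le_self_add) hig
  have hiS : i ∈ S := by
    by_contra hiS
    exact hg.not_prop_of_lt hlt ⟨hi, hiS⟩
  exact hisg ▸ S.add_mem hiS hs

theorem UnionIrreducible.eq_pair_add (hirr : UnionIrreducible (S : Set M) I)
    (hI : IsNormalizedRelIdeal (S : Set M) I) (hg : Minimal (· ∈ I \ S) g) :
    I = ({0, g} : Set M) + (S : Set M) := by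
  by_contra hne
  have hgI : g ∈ I := hg.prop.1
  have hsdiff_ne : I \ {g} ≠ I := (Set.sdiff_singleton_ssubset.2 hgI).ne
  exact hirr ⟨_, _, isNormalizedRelIdeal_add S (Set.mem_insert 0 {g}), hI.sdiff_singleton hg,
    Ne.symm hne, hsdiff_ne, hI.eq_pair_add_union_sdiff_singleton S.zero_mem hgI⟩

theorem union_irreducible_iff_general [WellFoundedLT M]
    (hI : IsNormalizedRelIdeal (S : Set M) I) :
    UnionIrreducible (S : Set M) I ↔ I = S ∨ ∃ g, g ∉ S ∧ I = ({0, g} : Set M) + (S : Set M) := by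
  constructor
  · intro hirr
    by_cases hIS : I ⊆ S
    · exact Or.inl (hIS.antisymm hI.subset)
    · obtain ⟨g, hg⟩ := exists_minimal_of_wellFoundedLT (· ∈ I \ S) (Set.not_subset.1 hIS)
      exact Or.inr ⟨g, hg.prop.2, hirr.eq_pair_add hI hg⟩
  · rintro (rfl | ⟨g, -, rfl⟩)
    · exact unionIrreducible_self _
    · exact unionIrreducible_pair_add S.zero_mem g

end CanonicallyOrdered

/-- `I ∈ 𝔑(S)` is `∪`-irreducible iff `I = S` or `I = {0, g} + S`
for some gap `g` of `S`. -/
theorem union_irreducible_iff (S : Set ℕ) (hS : IsNumericalSemigroup S)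
    (I : Set ℕ) (hI : IsNormalizedIdeal S I) :
    (¬ ∃ J K : Set ℕ, IsNormalizedIdeal S J ∧ IsNormalizedIdeal S K ∧
        J ≠ I ∧ K ≠ I ∧ I = J ∪ K) ↔
      (I = S ∨ ∃ g : ℕ, g ∉ S ∧ I = ({0, g} : Set ℕ) + S) :=
  union_irreducible_iff_general (S := ⟨⟨S, fun {a b} ha hb ↦ hS.2.1 a ha b hb⟩, hS.1⟩) hI
end

section
/- Let S be a numerical semigroup with m(S) ≤ 4 (so that (𝔑(S), ⪯) is a lattice) and let I ∈ 𝔑(S) \ {S}. If I is +-irreducible, then I is ∨-irreducible, i.e., I cannot be written as I = J ∨ K (supremum with respect to ⪯) with J, K ∈ 𝔑(S) \ {I}. -/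
open Pointwise

section

variable {S I J K M : Set ℕ}

theorem IsNormalizedIdeal.add (hJ : IsNormalizedIdeal S J) (hK : IsNormalizedIdeal S K) :
    IsNormalizedIdeal S (J + K) := by
  refine ⟨Set.mem_add.2 ⟨0, hJ.1, 0, hK.1, add_zero 0⟩, ?_⟩
  rintro _ ⟨j, hj, k, hk, rfl⟩ s hs
  exact Set.mem_add.2 ⟨j, hj, k + s, hK.2 k hk s hs, (add_assoc j k s).symm⟩

theorem IsNormalizedIdeal.preceq_add_right (hK : IsNormalizedIdeal S K) (J : Set ℕ) :
    Preceq S J (J + K) :=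
  ⟨K, hK, rfl⟩

theorem IsNormalizedIdeal.preceq_add_left_s15 (hJ : IsNormalizedIdeal S J) (K : Set ℕ) :
    Preceq S K (J + K) :=
  ⟨J, hJ, add_comm K J⟩

theorem Preceq.subset_s15 (h : Preceq S I J) : I ⊆ J := by
  obtain ⟨K, hK, rfl⟩ := h
  exact Set.subset_add_left I hK.1

theorem Preceq.antisymm (hIJ : Preceq S I J) (hJI : Preceq S J I) : I = J :=
  hIJ.subset_s15.antisymm hJI.subset_s15

theorem IsSupNI.preceq_add (h : IsSupNI S J K M) (hJ : IsNormalizedIdeal S J)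
    (hK : IsNormalizedIdeal S K) : Preceq S M (J + K) :=
  h.2.2.2 (J + K) (hJ.add hK) (hK.preceq_add_right J) (hJ.preceq_add_left_s15 K)

theorem PlusIrreducible.add_eq_self_of_preceq (hI : PlusIrreducible S I)
    (hJ : IsNormalizedIdeal S J) (hne : J ≠ I) (hJI : Preceq S J I) : J + I = I := by
  obtain ⟨A, hA, hJA⟩ := hJI
  have hIA : I = A := (hI.2.2 J A hJ hA hJA.symm).resolve_left hne.symm
  rwa [← hIA] at hJA

theorem IsNormalizedIdeal.add_preceq_of_add_eq_self (hI : IsNormalizedIdeal S I)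
    (hJI : J + I = I) (hKI : K + I = I) : Preceq S (J + K) I :=
  ⟨I, hI, by rw [add_assoc, hKI, hJI]⟩

end

/- A `+`-irreducible `I` absorbs every ideal strictly below it, so `J + K ⪯ I` for `J, K` strictly
below `I`. Since `J + K` is an upper bound of `J` and `K`, a supremum `I` of `J` and `K` would be
equal to `J + K`. -/
theorem plusIrred_imp_joinIrred_general (S I : Set ℕ) (hirr : PlusIrreducible S I) :
    ¬ ∃ J K : Set ℕ, IsNormalizedIdeal S J ∧ IsNormalizedIdeal S K ∧
      J ≠ I ∧ K ≠ I ∧ IsSupNI S J K I := by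
  rintro ⟨J, K, hJ, hK, hJI, hKI, hsup⟩
  have hJ_absorbed : J + I = I := hirr.add_eq_self_of_preceq hJ hJI hsup.2.1
  have hK_absorbed : K + I = I := hirr.add_eq_self_of_preceq hK hKI hsup.2.2.1
  have hsum_preceq : Preceq S (J + K) I :=
    hirr.1.add_preceq_of_add_eq_self hJ_absorbed hK_absorbed
  have hI_eq : I = J + K := (hsup.preceq_add hJ hK).antisymm hsum_preceq
  exact (hirr.2.2 J K hJ hK hI_eq).elim hJI.symm hKI.symm

/-- Lemma: if `m(S) ≤ 4` and `I ∈ 𝔑(S) \ {S}` is `+`-irreducible,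
then `I` is `∨`-irreducible. -/
theorem plusIrred_imp_joinIrred (S : Set ℕ) (hS : IsNumericalSemigroup S)
    (hm : multNS S ≤ 4) (I : Set ℕ) (hI : IsNormalizedIdeal S I) (hne : I ≠ S)
    (hirr : PlusIrreducible S I) :
    ¬ ∃ J K : Set ℕ, IsNormalizedIdeal S J ∧ IsNormalizedIdeal S K ∧
      J ≠ I ∧ K ≠ I ∧ IsSupNI S J K I :=
  plusIrred_imp_joinIrred_general S I hirr
end
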